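/- arXiv:2310.18763 — 2 statements merged into one kernel-verified Lean document; each statement's English description precedes it below -/
import Mathlib

section
/- Let f : ℝ^d → ℝ be differentiable with L-Lipschitz gradient (with respect to the Euclidean norm), and let τ > 0. Then the smoothed approximation f̂_τ(x) = E_u[f(x + τu)] (u uniform on the closed Euclidean unit ball) satisfies sup_{x ∈ ℝ^d} |f̂_τ(x) − f(x)| ≤ L τ² / 2. -/
/-! The first-order Taylor remainder of `f` at `x` is bounded by `L ‖v‖² / 2`
(`abs_taylor_remainder_le`). The uniform measure on the ball is invariant under `u ↦ -u`, so the
linear term `⟪∇f(x), τ u⟫` has mean zero (`integral_inner_uniformBall`), and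
`f̂_τ(x) - f(x)` is the mean of the Taylor remainder at `v = τ u`. Since `‖τ u‖ ≤ τ` on the ball,
that mean is at most `L τ² / 2` in absolute value. -/

open MeasureTheory Metric

/-- The uniform probability measure on the closed Euclidean unit ball in `ℝ^d`. -/
noncomputable def uniformBall (d : ℕ) : Measure (EuclideanSpace ℝ (Fin d)) :=
  (volume (closedBall (0 : EuclideanSpace ℝ (Fin d)) 1))⁻¹ •
    volume.restrict (closedBall (0 : EuclideanSpace ℝ (Fin d)) 1)

/-- The randomized smoothing `f̂_τ(x) = E_u[f(x + τ u)]`, `u` uniform on the closed unit ball. -/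
noncomputable def smoothedFn {d : ℕ} (f : EuclideanSpace ℝ (Fin d) → ℝ) (τ : ℝ)
    (x : EuclideanSpace ℝ (Fin d)) : ℝ :=
  ∫ u, f (x + τ • u) ∂(uniformBall d)

open scoped RealInnerProductSpace

/-- The descent lemma: along the segment from `x` to `x + v`, the derivative of the remainder at
time `t` is `⟪g (x + t v) - g x, v⟫`, hence at most `L ‖v‖² t` in absolute value. -/
lemma abs_taylor_remainder_le
    {E : Type*} [NormedAddCommGroup E] [InnerProductSpace ℝ E] [CompleteSpace E]
    {f : E → ℝ} {g : E → E} {L : ℝ}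
    (hgrad : ∀ x, HasGradientAt f (g x) x)
    (hgradLip : ∀ x y, ‖g x - g y‖ ≤ L * ‖x - y‖) (x v : E) :
    |f (x + v) - f x - ⟪g x, v⟫| ≤ L * ‖v‖ ^ 2 / 2 := by
  have hd (t : ℝ) : HasDerivAt (fun t : ℝ => f (x + t • v) - f x - t * ⟪g x, v⟫)
      (⟪g (x + t • v), v⟫ - ⟪g x, v⟫) t := by
    have hline : HasDerivAt (fun t : ℝ => x + t • v) v t := by
      simpa using ((hasDerivAt_id t).smul_const v).const_add x
    have hf := (hgrad (x + t • v)).hasFDerivAt.comp_hasDerivAt t hline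
    refine ((hf.sub_const (f x)).sub ((hasDerivAt_id t).mul_const ⟪g x, v⟫)).congr_deriv ?_
    simp
  have hB (t : ℝ) : HasDerivAt (fun t : ℝ => L * ‖v‖ ^ 2 / 2 * t ^ 2) (L * ‖v‖ ^ 2 * t) t := by
    refine ((hasDerivAt_pow 2 t).const_mul (L * ‖v‖ ^ 2 / 2)).congr_deriv ?_
    norm_num
    ring
  have key := image_norm_le_of_norm_deriv_right_le_deriv_boundary
    (f := fun t : ℝ => f (x + t • v) - f x - t * ⟪g x, v⟫) (a := 0) (b := 1)
    (fun t _ => (hd t).continuousAt.continuousWithinAt)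
    (fun t _ => (hd t).hasDerivWithinAt)
    (B := fun t : ℝ => L * ‖v‖ ^ 2 / 2 * t ^ 2) (B' := fun t => L * ‖v‖ ^ 2 * t)
    (by simp) hB
    (fun t ht => by
      rw [← inner_sub_left]
      calc ‖⟪g (x + t • v) - g x, v⟫‖ ≤ ‖g (x + t • v) - g x‖ * ‖v‖ := norm_inner_le_norm _ _
        _ ≤ L * ‖x + t • v - x‖ * ‖v‖ := by gcongr; exact hgradLip _ _
        _ = L * ‖v‖ ^ 2 * t := by
          rw [add_sub_cancel_left, norm_smul, Real.norm_of_nonneg ht.1]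
          ring)
    (Set.right_mem_Icc.2 zero_le_one)
  simpa using key

instance isProbabilityMeasure_uniformBall (d : ℕ) : IsProbabilityMeasure (uniformBall d) :=
  ProbabilityTheory.cond_isProbabilityMeasure_of_finite
    (measure_closedBall_pos _ _ one_pos).ne' measure_closedBall_lt_top.ne

lemma ae_norm_le_one_uniformBall (d : ℕ) : ∀ᵐ u ∂(uniformBall d), ‖u‖ ≤ 1 := by
  refine Measure.ae_smul_measure ?_ _
  filter_upwards [ae_restrict_mem measurableSet_closedBall] with u hu
  simpa using hu

lemma integrable_uniformBall {d : ℕ} {h : EuclideanSpace ℝ (Fin d) → ℝ} (hh : Continuous h) :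
    Integrable h (uniformBall d) := by
  refine Integrable.smul_measure ?_
    (ENNReal.inv_ne_top.2 (measure_closedBall_pos _ _ one_pos).ne')
  exact hh.continuousOn.integrableOn_compact (isCompact_closedBall _ _)

/-- The uniform distribution on the ball is centred, by symmetry under `u ↦ -u`. -/
lemma integral_inner_uniformBall {d : ℕ} (w : EuclideanSpace ℝ (Fin d)) :
    ∫ u, ⟪w, u⟫ ∂(uniformBall d) = 0 := by
  have hodd : ∫ u in closedBall (0 : EuclideanSpace ℝ (Fin d)) 1, ⟪w, u⟫ = 0 := by
    rw [← integral_indicator measurableSet_closedBall]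
    refine self_eq_neg.1 ?_
    rw [← integral_neg]
    conv_lhs => rw [← integral_neg_eq_self]
    refine integral_congr_ae (.of_forall fun u => ?_)
    by_cases hu : ‖u‖ ≤ 1 <;> simp [hu]
  rw [uniformBall, integral_smul_measure, hodd, smul_zero]

/-- If `f` is differentiable with `L`-Lipschitz gradient (w.r.t. the Euclidean
norm) and `τ > 0`, then `sup_x |f̂_τ(x) − f(x)| ≤ L τ² / 2`. -/
theorem statement5
    {d : ℕ} (f : EuclideanSpace ℝ (Fin d) → ℝ) (L τ : ℝ)
    (g : EuclideanSpace ℝ (Fin d) → EuclideanSpace ℝ (Fin d))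
    (hL : 0 ≤ L)
    (hgrad : ∀ x, HasGradientAt f (g x) x)
    (hgradLip : ∀ x y : EuclideanSpace ℝ (Fin d), ‖g x - g y‖ ≤ L * ‖x - y‖)
    (hτ : 0 < τ) :
    ∀ x : EuclideanSpace ℝ (Fin d), |smoothedFn f τ x - f x| ≤ L * τ ^ 2 / 2 := by
  intro x
  have hf : Continuous f := continuous_iff_continuousAt.2 fun y => (hgrad y).continuousAt
  have hf' : Integrable (fun u => f (x + τ • u)) (uniformBall d) :=
    integrable_uniformBall (by fun_prop)
  have hlin : Integrable (fun u => ⟪g x, τ • u⟫) (uniformBall d) :=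
    integrable_uniformBall (by fun_prop)
  have hmean : smoothedFn f τ x - f x
      = ∫ u, (f (x + τ • u) - f x - ⟪g x, τ • u⟫) ∂(uniformBall d) := by
    rw [integral_sub (f := fun u => f (x + τ • u) - f x) (hf'.sub (integrable_const _)) hlin,
      integral_sub hf' (integrable_const _)]
    simp [smoothedFn, inner_smul_right, integral_const_mul, integral_inner_uniformBall]
  rw [hmean, ← Real.norm_eq_abs]
  refine (norm_integral_le_of_norm_le_const (C := L * τ ^ 2 / 2) ?_).trans_eq (by simp)
  filter_upwards [ae_norm_le_one_uniformBall d] with u hu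
  refine (abs_taylor_remainder_le hgrad hgradLip x (τ • u)).trans ?_
  have : ‖τ • u‖ ≤ τ := by
    rw [norm_smul, Real.norm_of_nonneg hτ.le]
    exact mul_le_of_le_one_right hτ.le hu
  gcongr
end

section
/- Let 1 ≤ α ≤ 2 and let x₁, …, x_B be real random variables forming a martingale difference sequence, i.e., E[x_i | x_{i−1}, …, x₁] = 0 for all 1 < i ≤ B and E[x₁] = 0, and suppose E[|x_i|^α | x_{i−1}, …, x₁] ≤ σ^α almost surely for every i and some σ ≥ 0. Then E[ |(1/B) Σ_{i=1}^B x_i|^α ] ≤ 2σ^α / B^{α−1}. -/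
/-!
The proof follows von Bahr and Esseen. For `1 ≤ α ≤ 2` there is the pointwise inequality
`|a + b|^α ≤ |a|^α + g(a) b + 2 |b|^α` with `g(a) = α |a|^α / a`, the derivative of
`|·|^α` for `a ≠ 0` (`abs_add_rpow_le`). By homogeneity it reduces to `a = 1`, where Bernoulli's inequalities
and the subadditivity of `y ↦ y^(α-1)` suffice.
Take `a` to be a partial sum of the `x i` and `b` the next term: the linear term has zero
expectation by the martingale difference property, so each step increases `E|S|^α` by at most
`2 E|x i|^α ≤ 2 σ^α`. Hence `E|S_B|^α ≤ 2 B σ^α`, and dividing by `B^α` gives the claim.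
-/

open MeasureTheory

/-- The σ-algebra generated by `x j` for `j < i` (the "past" of the sequence at time `i`). -/
def pastSigma {Ω E : Type*} [MeasurableSpace E] {B : ℕ} (x : Fin B → Ω → E) (i : Fin B) :
    MeasurableSpace Ω :=
  ⨆ j : Fin B, ⨆ _ : (j : ℕ) < (i : ℕ), MeasurableSpace.comap (x j) inferInstance

/-- The case `a = 1` of `abs_add_rpow_le`. -/
lemma abs_one_add_rpow_le {α : ℝ} (h1 : 1 ≤ α) (h2 : α ≤ 2) (b : ℝ) :
    |1 + b| ^ α ≤ 1 + α * b + 2 * |b| ^ α := by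
  have split : ∀ y : ℝ, 0 ≤ y → y ^ α = y * y ^ (α - 1) := by
    intro y hy
    rw [← Real.rpow_one_add' hy (by linarith)]
    congr 1
    ring
  rcases le_or_gt b (-1) with hb | hb
    -- With `t = -b ≥ 1`: `(t - 1)^α ≤ t^α`, and `t^α ≥ α t - 1` by Bernoulli.
  · obtain ⟨t, rfl⟩ : ∃ t, b = -t := ⟨-b, by ring⟩
    have ht : 1 ≤ t := by linarith
    have e1 : |1 + -t| = t - 1 := by rw [abs_of_nonpos (by linarith)]; ring
    have e2 : |-t| = t := by rw [abs_neg, abs_of_nonneg (by linarith)]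
    have bern := one_add_mul_self_le_rpow_one_add (s := t - 1) (by linarith) h1
    rw [show 1 + (t - 1) = t by ring] at bern
    have mono : (t - 1) ^ α ≤ t ^ α :=
      Real.rpow_le_rpow (by linarith) (by linarith) (by linarith)
    rw [e1, e2]
    nlinarith
  · have e1 : |1 + b| = 1 + b := abs_of_pos (by linarith)
    rw [e1, split _ (by linarith)]
    have bern := rpow_one_add_le_one_add_mul_self (s := b) (by linarith)
      (p := α - 1) (by linarith) (by linarith)
    rcases le_or_gt |b| 1 with hb1 | hb1
    · have hsq : |b| ^ (2 : ℝ) ≤ |b| ^ α := by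
        rcases (abs_nonneg b).eq_or_lt with h0 | h0
        · rw [← h0, Real.zero_rpow (by norm_num), Real.zero_rpow (by linarith)]
        · exact Real.rpow_le_rpow_of_exponent_ge h0 hb1 h2
      rw [Real.rpow_two, sq_abs] at hsq
      have := mul_le_mul_of_nonneg_left bern (by linarith : 0 ≤ 1 + b)
      nlinarith [sq_nonneg b]
      -- Here `b > 1`, and subadditivity of `y ↦ y^(α-1)` replaces Bernoulli.
    · have hb2 : 1 < b := by
        rcases lt_abs.1 hb1 with h | h <;> linarith
      rw [abs_of_pos (by linarith), split b (by linarith)]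
      have sub : (1 + b) ^ (α - 1) ≤ 1 + b ^ (α - 1) := by
        have := Real.rpow_add_le_add_rpow (p := α - 1) (zero_le_one' ℝ) (by linarith : 0 ≤ b)
          (by linarith) (by linarith)
        simpa using this
      have hp : 0 ≤ b ^ (α - 1) := Real.rpow_nonneg (by linarith) _
      have := mul_le_mul_of_nonneg_left sub (by linarith : 0 ≤ 1 + b)
      nlinarith

/-- The coefficient `α * (|a| ^ α / a)` is the derivative of `|·| ^ α` at `a`. At `a = 0` it
evaluates to `0`, which is again the derivative if `α > 1` and a subgradient if `α = 1`. -/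
lemma abs_add_rpow_le {α : ℝ} (h1 : 1 ≤ α) (h2 : α ≤ 2) (a b : ℝ) :
    |a + b| ^ α ≤ |a| ^ α + α * (|a| ^ α / a) * b + 2 * |b| ^ α := by
  have hb : 0 ≤ |b| ^ α := Real.rpow_nonneg (abs_nonneg _) _
  rcases eq_or_ne a 0 with rfl | ha
  · have : (0 : ℝ) ^ α = 0 := Real.zero_rpow (by linarith)
    simp [this]
    linarith
  · have ha' : 0 < |a| ^ α := Real.rpow_pos_of_pos (abs_pos.2 ha) _
    have key := mul_le_mul_of_nonneg_left (abs_one_add_rpow_le h1 h2 (b / a)) ha'.le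
    rw [← Real.mul_rpow (abs_nonneg _) (abs_nonneg _), ← abs_mul, abs_div,
      Real.div_rpow (abs_nonneg _) (abs_nonneg _), mul_add, mul_one, mul_div_cancel₀ b ha] at key
    refine key.trans (le_of_eq ?_)
    field_simp

/-- The linear term in `abs_add_rpow_le` is dominated by applying that inequality to `b` and `-b`. -/
lemma abs_linear_term_le {α : ℝ} (h1 : 1 ≤ α) (h2 : α ≤ 2) (a b : ℝ) :
    |α * (|a| ^ α / a) * b| ≤ |a| ^ α + 2 * |b| ^ α := by
  have p := abs_add_rpow_le h1 h2 a b
  have q := abs_add_rpow_le h1 h2 a (-b)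
  rw [abs_neg] at q
  have p0 : 0 ≤ |a + b| ^ α := Real.rpow_nonneg (abs_nonneg _) _
  have q0 : 0 ≤ |a + -b| ^ α := Real.rpow_nonneg (abs_nonneg _) _
  rw [abs_le]
  constructor <;> linarith

/-- One step of the induction: adding a term `Y` with zero conditional expectation given a
σ-algebra for which `S` is measurable increases `E|S|^α` by at most `2 E|Y|^α`. -/
lemma integral_abs_add_rpow_le {Ω : Type*} {m m0 : MeasurableSpace Ω} (P : Measure Ω)
    [IsProbabilityMeasure P] (hm : m ≤ m0) {α : ℝ} (h1 : 1 ≤ α) (h2 : α ≤ 2) {S Y : Ω → ℝ}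
    (hS : Measurable[m] S) (hY : Measurable Y) (hYint : Integrable Y P)
    (hSα : Integrable (fun ω => |S ω| ^ α) P) (hYα : Integrable (fun ω => |Y ω| ^ α) P)
    (hc : P[Y|m] =ᵐ[P] 0) :
    Integrable (fun ω => |S ω + Y ω| ^ α) P ∧
      ∫ ω, |S ω + Y ω| ^ α ∂P ≤ ∫ ω, |S ω| ^ α ∂P + 2 * ∫ ω, |Y ω| ^ α ∂P := by
  have hS0 : Measurable S := hS.mono hm le_rfl
  set G : Ω → ℝ := fun ω => α * (|S ω| ^ α / S ω) with hG
  have hφ : Measurable (fun s : ℝ => α * (|s| ^ α / s)) := by fun_prop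
  have hGm : Measurable[m] G := hφ.comp hS
  have hG0 : Measurable G := hGm.mono hm le_rfl
  have hGY : Integrable (G * Y) P := by
    refine (hSα.add (hYα.const_mul 2)).mono' (hG0.mul hY).aestronglyMeasurable ?_
    exact Filter.Eventually.of_forall fun ω => abs_linear_term_le h1 h2 (S ω) (Y ω)
  have hzero : ∫ ω, (G * Y) ω ∂P = 0 := by
    rw [← integral_condExp hm]
    have pull : P[G * Y|m] =ᵐ[P] G * P[Y|m] :=
      condExp_mul_of_stronglyMeasurable_left hGm.stronglyMeasurable hGY hYint
    rw [integral_congr_ae (g := fun _ => (0 : ℝ))]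
    · simp
    · filter_upwards [pull, hc] with ω e1 e2
      rw [e1, Pi.mul_apply, e2]
      simp
  have hR : Integrable (fun ω => |S ω| ^ α + (G * Y) ω + 2 * |Y ω| ^ α) P :=
    (hSα.add hGY).add (hYα.const_mul 2)
  have hle : ∀ ω, |S ω + Y ω| ^ α ≤ |S ω| ^ α + (G * Y) ω + 2 * |Y ω| ^ α :=
    fun ω => abs_add_rpow_le h1 h2 (S ω) (Y ω)
  have hL : Integrable (fun ω => |S ω + Y ω| ^ α) P := by
    refine hR.mono' (by have := hS0.add hY; exact (this.abs.pow_const α).aestronglyMeasurable) (Filter.Eventually.of_forall fun ω => ?_)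
    rw [Real.norm_of_nonneg (Real.rpow_nonneg (abs_nonneg _) _)]
    exact hle ω
  refine ⟨hL, (integral_mono hL hR hle).trans (le_of_eq ?_)⟩
  have e1 := integral_add (hSα.add hGY) (hYα.const_mul 2)
  have e2 := integral_add hSα hGY
  simp only [Pi.add_apply] at e1 e2
  rw [e1, e2, hzero, integral_const_mul, add_zero]

/-- batching lemma, scalar case. Let `x₁, …, x_B` be a real martingale
difference sequence with conditional `α`-th moments bounded by `σ^α` (`1 ≤ α ≤ 2`). Then
`E[|B⁻¹ Σᵢ xᵢ|^α] ≤ 2 σ^α / B^{α−1}`. -/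
theorem statement7
    {Ω : Type*} [MeasurableSpace Ω] (P : Measure Ω) [IsProbabilityMeasure P]
    (B : ℕ) (hB : 1 ≤ B) (x : Fin B → Ω → ℝ) (α σ : ℝ)
    (hα : α ∈ Set.Icc (1 : ℝ) 2) (hσ : 0 ≤ σ)
    (hmeas : ∀ i, Measurable (x i))
    (hint : ∀ i, Integrable (x i) P)
    (hintα : ∀ i, Integrable (fun ω => |x i ω| ^ α) P)
    (hmds : ∀ i : Fin B, P[x i|pastSigma x i] =ᵐ[P] 0)
    (hmom : ∀ i : Fin B, ∀ᵐ ω ∂P, (P[fun ω => |x i ω| ^ α|pastSigma x i]) ω ≤ σ ^ α) :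
    ∫ ω, |(1 / (B : ℝ)) * ∑ i, x i ω| ^ α ∂P ≤ 2 * σ ^ α / (B : ℝ) ^ (α - 1) := by
  obtain ⟨h1, h2⟩ := hα
  have hm : ∀ i, pastSigma x i ≤ ‹MeasurableSpace Ω› := fun i =>
    iSup_le fun j => iSup_le fun _ => (hmeas j).comap_le
  have hmoment : ∀ i, ∫ ω, |x i ω| ^ α ∂P ≤ σ ^ α := by
    intro i
    rw [← integral_condExp (hm i)]
    refine (integral_mono_ae integrable_condExp (integrable_const (σ ^ α)) (hmom i)).trans ?_
    simp
  have main : ∀ n : ℕ, n ≤ B →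
      Integrable (fun ω => |∑ i : Fin B with i.val < n, x i ω| ^ α) P ∧
      ∫ ω, |∑ i : Fin B with i.val < n, x i ω| ^ α ∂P ≤ 2 * n * σ ^ α := by
    intro n
    induction n with
    | zero =>
      intro _
      have : (0 : ℝ) ^ α = 0 := Real.zero_rpow (by linarith)
      simp [this]
    | succ n ih =>
      intro hn
      obtain ⟨ih1, ih2⟩ := ih (by omega)
      set k : Fin B := ⟨n, by omega⟩ with hk
      have hfilter : (Finset.univ.filter fun i : Fin B => i.val < n + 1)
          = insert k (Finset.univ.filter fun i : Fin B => i.val < n) := by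
        ext i
        simp [hk, Fin.ext_iff]
        omega
      have hsum : ∀ ω, ∑ i : Fin B with i.val < n + 1, x i ω
          = (∑ i : Fin B with i.val < n, x i ω) + x k ω := by
        intro ω
        rw [hfilter, Finset.sum_insert (by simp [hk]), add_comm]
      have hSm : Measurable[pastSigma x k] fun ω => ∑ i : Fin B with i.val < n, x i ω := by
        refine Finset.measurable_fun_sum _ fun j hj => ?_
        have hj' : (j : ℕ) < (k : ℕ) := by simpa [hk] using hj
        exact (comap_measurable (x j)).mono
          (le_iSup₂_of_le (f := fun (j : Fin B) (_ : (j : ℕ) < (k : ℕ)) =>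
            MeasurableSpace.comap (x j) inferInstance) j hj' le_rfl) le_rfl
      obtain ⟨s1, s2⟩ := integral_abs_add_rpow_le P (hm k) h1 h2 hSm (hmeas k) (hint k) ih1
        (hintα k) (hmds k)
      simp only [hsum]
      refine ⟨s1, s2.trans ?_⟩
      have := hmoment k
      push_cast
      linarith
  have hBpos : (0 : ℝ) < B := by exact_mod_cast hB
  have hfull := (main B le_rfl).2
  simp only [Fin.is_lt, Finset.filter_true] at hfull
  have hscale : ∀ ω, |(1 / (B : ℝ)) * ∑ i, x i ω| ^ α
      = ((B : ℝ) ^ α)⁻¹ * |∑ i, x i ω| ^ α := by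
    intro ω
    rw [abs_mul, abs_of_pos (by positivity), Real.mul_rpow (by positivity) (abs_nonneg _),
      one_div, Real.inv_rpow hBpos.le]
  simp only [hscale]
  rw [integral_const_mul]
  refine (mul_le_mul_of_nonneg_left hfull (by positivity)).trans (le_of_eq ?_)
  rw [Real.rpow_sub_one hBpos.ne']
  field_simp
end
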